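/- The hypergraph on 33 vertices {1,...,9,A,...,X} with the 40 hyperedges 123, 147, 456, 5QR, 6ST, 789, 8MN, 9OP, AT, 1AB, BN, BO, 1CD, CR, CS, DM, DP, 4EF, FM, FO, 4GH, HN, HP, 7IJ, JS, 7KL, LR, LT, AQ, JQ, EU, KU, 2UV, GV, IV, GW, KW, 3WX, EX, IX (the Peres P-33 set, i.e. the 33-40 set) admits no admissible {0,1}-assignment, but it is NOT critical: there exists a hyperedge whose deletion yields a hypergraph that still admits no admissible {0,1}-assignment. -/

import Mathlib

def peres3340 : List (Finset ℕ) :=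
  [{1, 2, 3},
   {1, 4, 7},
   {4, 5, 6},
   {5, 26, 27},
   {6, 28, 29},
   {7, 8, 9},
   {8, 22, 23},
   {9, 24, 25},
   {10, 29},
   {1, 10, 11},
   {11, 23},
   {11, 24},
   {1, 12, 13},
   {12, 27},
   {12, 28},
   {13, 22},
   {13, 25},
   {4, 14, 15},
   {15, 22},
   {15, 24},
   {4, 16, 17},
   {17, 23},
   {17, 25},
   {7, 18, 19},
   {19, 28},
   {7, 20, 21},
   {21, 27},
   {21, 29},
   {10, 26},
   {19, 26},
   {14, 30},
   {20, 30},
   {2, 30, 31},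
   {16, 31},
   {18, 31},
   {16, 32},
   {20, 32},
   {3, 32, 33},
   {14, 33},
   {18, 33}]

def admissible (E : List (Finset ℕ)) (f : ℕ → Bool) : Prop :=
  ∀ e ∈ E, (e.filter (fun v => f v = true)).card = 1

/-- A two-element hyperedge forces complementary values. -/
lemma pair_val (f : ℕ → Bool) (a b : ℕ) (hab : a ≠ b)
    (h : (({a, b} : Finset ℕ).filter (fun v => f v = true)).card = 1) : f a = !f b := by
  cases ha : f a <;> cases hb : f b <;>
    simp_all [Finset.filter_insert, Finset.filter_singleton]

/-- A three-element hyperedge has a vertex assigned 1, and no two of them. -/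
lemma triple_val (f : ℕ → Bool) (a b c : ℕ) (hab : a ≠ b) (hac : a ≠ c) (hbc : b ≠ c)
    (h : (({a, b, c} : Finset ℕ).filter (fun v => f v = true)).card = 1) :
    (f a || f b || f c) = true ∧ (f a && f b) = false ∧ (f b && f c) = false := by
  cases ha : f a <;> cases hb : f b <;> cases hc : f c <;>
    simp_all [Finset.filter_insert, Finset.filter_singleton]

/-- The hyperedges 456, 5QR, 6ST, AT, AQ, JQ, JS, CS, CR already exclude an
admissible assignment. -/
lemma no_assignment (f : ℕ → Bool)
    (H : ∀ e' ∈ peres3340, e' ≠ {1, 2, 3} →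
      (e'.filter (fun v => f v = true)).card = 1) : False := by
  have t1 := triple_val f 4 5 6 (by decide) (by decide) (by decide)
    (H _ (by simp [peres3340]) (by decide))
  have t2 := triple_val f 5 26 27 (by decide) (by decide) (by decide)
    (H _ (by simp [peres3340]) (by decide))
  have t3 := triple_val f 6 28 29 (by decide) (by decide) (by decide)
    (H _ (by simp [peres3340]) (by decide))
  have p0 := pair_val f 10 29 (by decide) (H _ (by simp [peres3340]) (by decide))
  have p1 := pair_val f 10 26 (by decide) (H _ (by simp [peres3340]) (by decide))
  have p2 := pair_val f 19 26 (by decide) (H _ (by simp [peres3340]) (by decide))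
  have p3 := pair_val f 19 28 (by decide) (H _ (by simp [peres3340]) (by decide))
  have p4 := pair_val f 12 28 (by decide) (H _ (by simp [peres3340]) (by decide))
  have p5 := pair_val f 12 27 (by decide) (H _ (by simp [peres3340]) (by decide))
  cases h : f 10 <;> simp_all

theorem peres3340_KS_not_critical :
    (¬ ∃ f : ℕ → Bool, admissible peres3340 f) ∧
    ∃ e ∈ peres3340, ¬ ∃ f : ℕ → Bool,
      ∀ e' ∈ peres3340, e' ≠ e → (e'.filter (fun v => f v = true)).card = 1 := by
  refine ⟨?_, {1, 2, 3}, by simp [peres3340], ?_⟩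
  · rintro ⟨f, hf⟩
    exact no_assignment f (fun e he _ => hf e he)
  · rintro ⟨f, hf⟩
    exact no_assignment f hf
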